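/- arXiv:2602.21431 — 3 statements merged into one kernel-verified Lean document; each statement's English description precedes it below -/
import Mathlib

section
/- Let k be a commutative ring, A an associative k-algebra, and B₁, B₂ : A × A → A two k-bilinear maps. Equip the k-module A × A × A with the multiplication (a₀,a₁,a₂)·(b₀,b₁,b₂) = (a₀b₀, a₀b₁ + a₁b₀ + B₁(a₀,b₀), a₀b₂ + a₁b₁ + a₂b₀ + B₁(a₀,b₁) + B₁(a₁,b₀) + B₂(a₀,b₀)). This multiplication is associative if and only if B₁ is a Hochschild 2-cocycle and, for all a, b, c ∈ A, a·B₂(b,c) − B₂(a·b, c) + B₂(a, b·c) − B₂(a,b)·c = B₁(B₁(a,b), c) − B₁(a, B₁(b,c)). -/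
/-!
Extend the star product `μ + x B₁ + x² B₂` bilinearly over `k[x]/(x³)`. Both bracketings of a
triple product are then trilinear over `k[x]/(x³)`, hence determined by their values on triples of
constants, so associativity amounts to comparing the coefficients of `1`, `x` and `x²` there. When
`μ` is an associative multiplication, the comparison is void in order `0`, reads `δB₁ = 0` in order
`1`, and in order `2` says that `δB₂` is the associator of `B₁`.
-/

/-- The multiplication on `A × A × A` modelling a second-order deformation of `A` over
`k[x]/(x³)`, with star product `a ∗ b = ab + x B₁(a,b) + x² B₂(a,b)`. -/
def deformMul₂ {k A : Type*} [CommRing k] [Ring A] [Algebra k A]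
    (B₁ B₂ : A →ₗ[k] A →ₗ[k] A) (x y : A × A × A) : A × A × A :=
  (x.1 * y.1,
   x.1 * y.2.1 + x.2.1 * y.1 + B₁ x.1 y.1,
   x.1 * y.2.2 + x.2.1 * y.2.1 + x.2.2 * y.1 + B₁ x.1 y.2.1 + B₁ x.2.1 y.1 + B₂ x.1 y.1)

namespace Deformation

section Module

variable {k M : Type*} [CommSemiring k] [AddCommMonoid M] [Module k M]

/-- The star product `μ + x B₁ + x² B₂` on `M ⊗ k[x]/(x³)`, where `(m₀, m₁, m₂)` encodes
`m₀ + x m₁ + x² m₂`. It is `deformMul₂` when `μ` is the multiplication of an algebra; a general `μ`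
puts the coefficients `μ`, `B₁`, `B₂` on an equal footing. -/
def starMul₂ (μ B₁ B₂ : M →ₗ[k] M →ₗ[k] M) (x y : M × M × M) : M × M × M :=
  (μ x.1 y.1,
   μ x.1 y.2.1 + μ x.2.1 y.1 + B₁ x.1 y.1,
   μ x.1 y.2.2 + μ x.2.1 y.2.1 + μ x.2.2 y.1 + B₁ x.1 y.2.1 + B₁ x.2.1 y.1 + B₂ x.1 y.1)

/-- The extension of `T₀ + x T₁ + x² T₂` to a `k[x]/(x³)`-trilinear operation, where `(m₀, m₁, m₂)`
encodes `m₀ + x m₁ + x² m₂`. It is the common shape of both bracketings of a triple star product. -/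
def trilinearExt₂ (T₀ T₁ T₂ : M →ₗ[k] M →ₗ[k] M →ₗ[k] M) (x y z : M × M × M) : M × M × M :=
  (T₀ x.1 y.1 z.1,
   T₀ x.1 y.1 z.2.1 + T₀ x.1 y.2.1 z.1 + T₀ x.2.1 y.1 z.1 + T₁ x.1 y.1 z.1,
   T₀ x.1 y.1 z.2.2 + T₀ x.1 y.2.2 z.1 + T₀ x.2.2 y.1 z.1 +
     T₀ x.1 y.2.1 z.2.1 + T₀ x.2.1 y.1 z.2.1 + T₀ x.2.1 y.2.1 z.1 +
     T₁ x.1 y.1 z.2.1 + T₁ x.1 y.2.1 z.1 + T₁ x.2.1 y.1 z.1 + T₂ x.1 y.1 z.1)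

/-- The trilinear map `(a, b, c) ↦ f (g (a, b), c)`, the first term of Gerstenhaber's circle product
`f (g (a, b), c) - f (a, g (b, c))` of two bilinear operations. -/
def leftComp (f g : M →ₗ[k] M →ₗ[k] M) : M →ₗ[k] M →ₗ[k] M →ₗ[k] M :=
  g.compr₂ f

/-- The trilinear map `(a, b, c) ↦ f (a, g (b, c))`, which Gerstenhaber's circle product of two
bilinear operations subtracts from `leftComp f g`. Keeping the two terms apart avoids
subtraction in `M`. -/
def rightComp (f g : M →ₗ[k] M →ₗ[k] M) : M →ₗ[k] M →ₗ[k] M →ₗ[k] M :=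
  LinearMap.lcomp k (M →ₗ[k] M) g ∘ₗ LinearMap.llcomp k M M M ∘ₗ f

@[simp]
theorem leftComp_apply (f g : M →ₗ[k] M →ₗ[k] M) (a b c : M) :
    leftComp f g a b c = f (g a b) c :=
  rfl

@[simp]
theorem rightComp_apply (f g : M →ₗ[k] M →ₗ[k] M) (a b c : M) :
    rightComp f g a b c = f a (g b c) :=
  rfl

theorem starMul₂_starMul₂_left (μ B₁ B₂ : M →ₗ[k] M →ₗ[k] M) (x y z : M × M × M) :
    starMul₂ μ B₁ B₂ (starMul₂ μ B₁ B₂ x y) z =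
      trilinearExt₂ (leftComp μ μ) (leftComp μ B₁ + leftComp B₁ μ)
        (leftComp μ B₂ + leftComp B₁ B₁ + leftComp B₂ μ) x y z := by
  simp only [starMul₂, trilinearExt₂, leftComp_apply, map_add, LinearMap.add_apply]
  congr 2 <;> abel

theorem starMul₂_starMul₂_right (μ B₁ B₂ : M →ₗ[k] M →ₗ[k] M) (x y z : M × M × M) :
    starMul₂ μ B₁ B₂ x (starMul₂ μ B₁ B₂ y z) =
      trilinearExt₂ (rightComp μ μ) (rightComp μ B₁ + rightComp B₁ μ)
        (rightComp μ B₂ + rightComp B₁ B₁ + rightComp B₂ μ) x y z := by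
  simp only [starMul₂, trilinearExt₂, rightComp_apply, map_add, LinearMap.add_apply]
  congr 2 <;> abel

theorem trilinearExt₂_const (T₀ T₁ T₂ : M →ₗ[k] M →ₗ[k] M →ₗ[k] M) (a b c : M) :
    trilinearExt₂ T₀ T₁ T₂ (a, 0, 0) (b, 0, 0) (c, 0, 0) = (T₀ a b c, T₁ a b c, T₂ a b c) := by
  simp only [trilinearExt₂, map_zero, LinearMap.zero_apply, zero_add]

theorem trilinearExt₂_eq_iff {S₀ S₁ S₂ T₀ T₁ T₂ : M →ₗ[k] M →ₗ[k] M →ₗ[k] M} :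
    (∀ x y z, trilinearExt₂ S₀ S₁ S₂ x y z = trilinearExt₂ T₀ T₁ T₂ x y z) ↔
      S₀ = T₀ ∧ S₁ = T₁ ∧ S₂ = T₂ := by
  constructor
  · intro h
    have h_const (a b c : M) :
        (S₀ a b c, S₁ a b c, S₂ a b c) = (T₀ a b c, T₁ a b c, T₂ a b c) := by
      simpa only [trilinearExt₂_const] using h (a, 0, 0) (b, 0, 0) (c, 0, 0)
    simp only [Prod.mk.injEq] at h_const
    refine ⟨?_, ?_, ?_⟩ <;> ext a b c
    exacts [(h_const a b c).1, (h_const a b c).2.1, (h_const a b c).2.2]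
  · rintro ⟨rfl, rfl, rfl⟩ x y z
    rfl

theorem starMul₂_assoc_iff (μ B₁ B₂ : M →ₗ[k] M →ₗ[k] M) :
    (∀ x y z, starMul₂ μ B₁ B₂ (starMul₂ μ B₁ B₂ x y) z =
        starMul₂ μ B₁ B₂ x (starMul₂ μ B₁ B₂ y z)) ↔
      leftComp μ μ = rightComp μ μ ∧
      leftComp μ B₁ + leftComp B₁ μ = rightComp μ B₁ + rightComp B₁ μ ∧
      leftComp μ B₂ + leftComp B₁ B₁ + leftComp B₂ μ =
        rightComp μ B₂ + rightComp B₁ B₁ + rightComp B₂ μ := by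
  simp only [starMul₂_starMul₂_left, starMul₂_starMul₂_right, trilinearExt₂_eq_iff]

end Module

theorem leftComp_mul_self {k A : Type*} [CommSemiring k] [NonUnitalSemiring A] [Module k A]
    [IsScalarTower k A A] [SMulCommClass k A A] :
    leftComp (LinearMap.mul k A) (LinearMap.mul k A) =
      rightComp (LinearMap.mul k A) (LinearMap.mul k A) := by
  ext a b c
  exact mul_assoc a b c

section Hochschild

variable {k A : Type*} [CommSemiring k] [NonUnitalNonAssocRing A] [Module k A]

/-- The Hochschild coboundary `δB` of a 2-cochain `B`, with coefficients in the algebra itself. -/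
def hochschildCoboundary (B : A →ₗ[k] A →ₗ[k] A) (a b c : A) : A :=
  a * B b c - B (a * b) c + B a (b * c) - B a b * c

theorem hochschildCoboundary_eq_sub (B : A →ₗ[k] A →ₗ[k] A) (a b c : A) :
    hochschildCoboundary B a b c =
      (a * B b c + B a (b * c)) - (B a b * c + B (a * b) c) := by
  unfold hochschildCoboundary
  abel

variable [IsScalarTower k A A] [SMulCommClass k A A]

open LinearMap (mul)

theorem leftComp_mul_add_eq_iff_hochschildCoboundary_eq_zero (B : A →ₗ[k] A →ₗ[k] A) :
    leftComp (mul k A) B + leftComp B (mul k A) = rightComp (mul k A) B + rightComp B (mul k A) ↔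
      ∀ a b c, hochschildCoboundary B a b c = 0 := by
  simp only [LinearMap.ext_iff, LinearMap.add_apply, leftComp_apply, rightComp_apply,
    LinearMap.mul_apply', hochschildCoboundary_eq_sub, sub_eq_zero]
  exact forall₃_congr fun _ _ _ ↦ eq_comm

theorem leftComp_mul_add_eq_iff_hochschildCoboundary_eq_associator (B₁ B₂ : A →ₗ[k] A →ₗ[k] A) :
    leftComp (mul k A) B₂ + leftComp B₁ B₁ + leftComp B₂ (mul k A) =
        rightComp (mul k A) B₂ + rightComp B₁ B₁ + rightComp B₂ (mul k A) ↔
      ∀ a b c, hochschildCoboundary B₂ a b c = B₁ (B₁ a b) c - B₁ a (B₁ b c) := by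
  simp only [LinearMap.ext_iff, LinearMap.add_apply, leftComp_apply, rightComp_apply,
    LinearMap.mul_apply', hochschildCoboundary_eq_sub, sub_eq_sub_iff_add_eq_add]
  refine forall₃_congr fun a b c ↦ ?_
  rw [eq_comm, add_right_comm, add_right_comm (B₂ a b * c), add_comm (_ + _) (B₁ (B₁ a b) c)]

end Hochschild

end Deformation

open Deformation in
theorem deformMul₂_assoc_iff_general
    {k A : Type*} [CommSemiring k] [NonUnitalRing A] [Module k A]
    [IsScalarTower k A A] [SMulCommClass k A A] (B₁ B₂ : A →ₗ[k] A →ₗ[k] A) :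
    (∀ x y z : A × A × A,
        starMul₂ (LinearMap.mul k A) B₁ B₂ (starMul₂ (LinearMap.mul k A) B₁ B₂ x y) z =
          starMul₂ (LinearMap.mul k A) B₁ B₂ x (starMul₂ (LinearMap.mul k A) B₁ B₂ y z)) ↔
      (∀ a b c : A, hochschildCoboundary B₁ a b c = 0) ∧
        ∀ a b c : A, hochschildCoboundary B₂ a b c = B₁ (B₁ a b) c - B₁ a (B₁ b c) := by
  rw [starMul₂_assoc_iff, leftComp_mul_add_eq_iff_hochschildCoboundary_eq_zero,
    leftComp_mul_add_eq_iff_hochschildCoboundary_eq_associator]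
  exact and_iff_right leftComp_mul_self

/-- The multiplication
`(a₀,a₁,a₂)·(b₀,b₁,b₂) = (a₀b₀, a₀b₁ + a₁b₀ + B₁(a₀,b₀),
  a₀b₂ + a₁b₁ + a₂b₀ + B₁(a₀,b₁) + B₁(a₁,b₀) + B₂(a₀,b₀))`
on `A × A × A` is associative iff `B₁` is a Hochschild 2-cocycle and the Hochschild
coboundary of `B₂` equals the obstruction `B₁(B₁(a,b),c) − B₁(a,B₁(b,c))`. -/
theorem deformMul₂_assoc_iff
    {k A : Type*} [CommRing k] [Ring A] [Algebra k A]
    (B₁ B₂ : A →ₗ[k] A →ₗ[k] A) :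
    (∀ x y z : A × A × A,
        deformMul₂ B₁ B₂ (deformMul₂ B₁ B₂ x y) z =
          deformMul₂ B₁ B₂ x (deformMul₂ B₁ B₂ y z)) ↔
      ((∀ a b c : A, a * B₁ b c - B₁ (a * b) c + B₁ a (b * c) - B₁ a b * c = 0) ∧
        ∀ a b c : A,
          a * B₂ b c - B₂ (a * b) c + B₂ a (b * c) - B₂ a b * c =
            B₁ (B₁ a b) c - B₁ a (B₁ b c)) :=
  deformMul₂_assoc_iff_general B₁ B₂
end

section
/- Let k be a commutative ring and A an associative k-algebra. Assume that every Hochschild 3-cocycle on A is a coboundary, i.e. for every k-trilinear T : A × A × A → A satisfying a·T(b,c,d) − T(a·b,c,d) + T(a,b·c,d) − T(a,b,c·d) + T(a,b,c)·d = 0 there exists a k-bilinear S : A × A → A with T(a,b,c) = a·S(b,c) − S(a·b,c) + S(a,b·c) − S(a,b)·c for all a,b,c. Then every Hochschild 2-cocycle B₁ on A extends to a second-order deformation: there exists a k-bilinear map B₂ : A × A → A such that a·B₂(b,c) − B₂(a·b, c) + B₂(a, b·c) − B₂(a,b)·c = B₁(B₁(a,b), c) − B₁(a, B₁(b,c)) for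 all a, b, c ∈ A. -/
/-!
The obstruction to extending `B₁` is its associator `B₁(B₁(a,b),c) − B₁(a,B₁(b,c))`. For any
bilinear `B`, the Hochschild coboundary of the associator of `B` is a signed sum of compositions of
`B` with its own coboundary, so it vanishes when `B` is a cocycle; the vanishing of `HH³` then makes
the associator a coboundary.
-/

section

variable {k M A : Type*} [CommSemiring k]

/-- The associator `(a, b, c) ↦ B(B(a,b),c) − B(a,B(b,c))` of a bilinear map: the obstruction to
extending the first-order deformation `B` to second order. -/
def bilinearAssociator [AddCommGroup M] [Module k M] (B : M →ₗ[k] M →ₗ[k] M) :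
    M →ₗ[k] M →ₗ[k] M →ₗ[k] M :=
  B.compr₂ B - (LinearMap.llcomp k M M M ∘ₗ B).compl₂ B

@[simp]
theorem bilinearAssociator_apply [AddCommGroup M] [Module k M] (B : M →ₗ[k] M →ₗ[k] M)
    (a b c : M) : bilinearAssociator B a b c = B (B a b) c - B a (B b c) :=
  rfl

variable [NonUnitalNonAssocRing A] [Module k A]

/-- The Hochschild coboundary of a bilinear 2-cochain, as a plain function, since over a product
that is not `k`-bilinear its values need not form a trilinear map. -/
def hochschildCoboundary₂ (B : A →ₗ[k] A →ₗ[k] A) (a b c : A) : A :=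
  a * B b c - B (a * b) c + B a (b * c) - B a b * c

/-- The Hochschild coboundary of a trilinear 3-cochain, as a plain function like
`hochschildCoboundary₂`. -/
def hochschildCoboundary₃ (T : A →ₗ[k] A →ₗ[k] A →ₗ[k] A) (a b c d : A) : A :=
  a * T b c d - T (a * b) c d + T a (b * c) d - T a b (c * d) + T a b c * d

theorem hochschildCoboundary₃_bilinearAssociator (B : A →ₗ[k] A →ₗ[k] A) (a b c d : A) :
    hochschildCoboundary₃ (bilinearAssociator B) a b c d =
      B (hochschildCoboundary₂ B a b c) d + B a (hochschildCoboundary₂ B b c d)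
        + hochschildCoboundary₂ B a (B b c) d - hochschildCoboundary₂ B a b (B c d)
        - hochschildCoboundary₂ B (B a b) c d := by
  simp only [hochschildCoboundary₃, hochschildCoboundary₂, bilinearAssociator_apply, mul_sub,
    sub_mul, map_add, map_sub, LinearMap.add_apply, LinearMap.sub_apply]
  abel

theorem hochschildCoboundary₃_bilinearAssociator_eq_zero {B : A →ₗ[k] A →ₗ[k] A}
    (hB : ∀ a b c : A, hochschildCoboundary₂ B a b c = 0) (a b c d : A) :
    hochschildCoboundary₃ (bilinearAssociator B) a b c d = 0 := by
  simp [hochschildCoboundary₃_bilinearAssociator, hB]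

theorem exists_second_order_extension_of_threeCocycles_are_coboundaries_general
    (h3 : ∀ T : A →ₗ[k] A →ₗ[k] A →ₗ[k] A, (∀ a b c d : A, hochschildCoboundary₃ T a b c d = 0) →
      ∃ S : A →ₗ[k] A →ₗ[k] A, ∀ a b c : A, T a b c = hochschildCoboundary₂ S a b c)
    (B₁ : A →ₗ[k] A →ₗ[k] A) (hB₁ : ∀ a b c : A, hochschildCoboundary₂ B₁ a b c = 0) :
    ∃ B₂ : A →ₗ[k] A →ₗ[k] A, ∀ a b c : A,
      hochschildCoboundary₂ B₂ a b c = B₁ (B₁ a b) c - B₁ a (B₁ b c) := by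
  obtain ⟨B₂, hB₂⟩ :=
    h3 (bilinearAssociator B₁) (hochschildCoboundary₃_bilinearAssociator_eq_zero hB₁)
  exact ⟨B₂, fun a b c => (hB₂ a b c).symm⟩

end

/-- If every Hochschild 3-cocycle on `A` is a coboundary (i.e. `HH³(A) = 0`), then every
Hochschild 2-cocycle `B₁` extends to a second-order deformation: there is a bilinear `B₂`
whose Hochschild coboundary equals the obstruction `B₁(B₁(a,b),c) − B₁(a,B₁(b,c))`. -/
theorem exists_second_order_extension_of_threeCocycles_are_coboundaries
    {k A : Type*} [CommRing k] [Ring A] [Algebra k A]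
    (h3 : ∀ T : A →ₗ[k] A →ₗ[k] A →ₗ[k] A,
      (∀ a b c d : A,
          a * T b c d - T (a * b) c d + T a (b * c) d - T a b (c * d) + T a b c * d = 0) →
      ∃ S : A →ₗ[k] A →ₗ[k] A, ∀ a b c : A,
        T a b c = a * S b c - S (a * b) c + S a (b * c) - S a b * c)
    (B₁ : A →ₗ[k] A →ₗ[k] A)
    (hB₁ : ∀ a b c : A, a * B₁ b c - B₁ (a * b) c + B₁ a (b * c) - B₁ a b * c = 0) :
    ∃ B₂ : A →ₗ[k] A →ₗ[k] A, ∀ a b c : A,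
      a * B₂ b c - B₂ (a * b) c + B₂ a (b * c) - B₂ a b * c =
        B₁ (B₁ a b) c - B₁ a (B₁ b c) := by
  exact exists_second_order_extension_of_threeCocycles_are_coboundaries_general h3 B₁ hB₁
end

section
/- Let k be an algebraically closed field of characteristic 0 and let 𝔤 be a finite-dimensional simple Lie algebra over k. Then every invariant alternating 4-linear form T on 𝔤 (i.e. T alternating with T(⁅w,x₁⁆,x₂,x₃,x₄) + T(x₁,⁅w,x₂⁆,x₃,x₄) + T(x₁,x₂,⁅w,x₃⁆,x₄) + T(x₁,x₂,x₃,⁅w,x₄⁆) = 0 for all w, x₁, x₂, x₃, x₄ ∈ 𝔤) vanishes identically. -/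
/-- An alternating 4-linear form `T` on a Lie algebra is invariant if
`T(⁅w,x₁⁆,x₂,x₃,x₄) + T(x₁,⁅w,x₂⁆,x₃,x₄) + T(x₁,x₂,⁅w,x₃⁆,x₄) + T(x₁,x₂,x₃,⁅w,x₄⁆) = 0`
for all `w, x₁, x₂, x₃, x₄`. -/
def IsInvariantAlt4 {k L : Type*} [Field k] [LieRing L] [LieAlgebra k L]
    (T : L [⋀^Fin 4]→ₗ[k] k) : Prop :=
  ∀ w x₁ x₂ x₃ x₄ : L,
    T ![⁅w, x₁⁆, x₂, x₃, x₄] + T ![x₁, ⁅w, x₂⁆, x₃, x₄] +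
      T ![x₁, x₂, ⁅w, x₃⁆, x₄] + T ![x₁, x₂, x₃, ⁅w, x₄⁆] = 0

/-!
Let `b` and `b'` be dual bases for the Killing form. The Casimir element `∑ i, b i * b' i` acts as
the identity on `L` and on `L*`. Let it act on `β(x, y)` for an equivariant skew map
`β : L × L → L*`: the terms in which both factors hit the same slot contribute `2 β(x, y)`, so the
mixed terms sum to `-β(x, y)`. Invariance of the Casimir tensor and the Jacobi identity then give
`β(x, y) = ∑ i, β(b' i, ⁅b i, ⁅x, y⁆⁆)`. Thus `β(x, y)` is a linear function of `⁅x, y⁆`, and the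
cyclic sum of `β(⁅x, y⁆, z)` vanishes by the Jacobi identity.

Apply this to `β(y, z)(w) = ∑ i, T(y, z, ⁅b' i, w⁆, b i)`. Antisymmetrizing the invariance of `T`
in two arguments shows that `T(⁅u, v⁆, x, y, z)` is the sum of `T(u, v, ⁅x, y⁆, z)` over cyclic
permutations of `x, y, z`. Taking `u = b i`, `v = ⁅b' i, w⁆` and summing over `i` expresses
`T(w, x, y, z)` as minus the cyclic sum of `β(⁅x, y⁆, z)(w)`, which is zero.
-/

open LieAlgebra LieAlgebra.IsKilling LieModule

section DualBasis

variable {k V N ι : Type*} [Field k] [AddCommGroup V] [Module k V] [AddCommGroup N] [Module k N]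
  [DecidableEq ι] {Φ : LinearMap.BilinForm k V}

lemma repr_eq_apply_dualBasis [Finite ι] (hΦ : Φ.Nondegenerate) (b : Module.Basis ι k V)
    (x : V) (i : ι) :
    b.repr x i = Φ (Φ.dualBasis hΦ b i) x := by
  simpa using LinearMap.BilinForm.dualBasis_repr_apply hΦ.flip (Φ.dualBasis hΦ b) x i

variable [Fintype ι]

lemma sum_apply_smul_dualBasis (hΦ : Φ.Nondegenerate) (b : Module.Basis ι k V) (x : V) :
    ∑ i, Φ x (b i) • Φ.dualBasis hΦ b i = x := by
  simpa only [LinearMap.BilinForm.dualBasis_repr_apply] using (Φ.dualBasis hΦ b).sum_repr x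

lemma sum_apply_dualBasis_of_isAdjointPair (hΦ : Φ.Nondegenerate) (b : Module.Basis ι k V)
    {f g : V → V} (hfg : LinearMap.IsAdjointPair Φ Φ f g) (B : V →ₗ[k] V →ₗ[k] N) :
    ∑ i, B (f (Φ.dualBasis hΦ b i)) (b i) = ∑ i, B (Φ.dualBasis hΦ b i) (g (b i)) := by
  calc ∑ i, B (f (Φ.dualBasis hΦ b i)) (b i)
      = ∑ i, ∑ j, Φ (f (Φ.dualBasis hΦ b i)) (b j) • B (Φ.dualBasis hΦ b j) (b i) := by
        refine Finset.sum_congr rfl fun i _ ↦ ?_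
        conv_lhs => rw [← sum_apply_smul_dualBasis hΦ b (f _)]
        simp only [map_sum, map_smul, LinearMap.sum_apply, LinearMap.smul_apply]
    _ = ∑ j, ∑ i, Φ (Φ.dualBasis hΦ b i) (g (b j)) • B (Φ.dualBasis hΦ b j) (b i) := by
        rw [Finset.sum_comm]
        simp only [hfg _ _]
    _ = ∑ j, B (Φ.dualBasis hΦ b j) (g (b j)) := by
        refine Finset.sum_congr rfl fun j _ ↦ ?_
        conv_rhs => rw [← b.sum_repr (g (b j))]
        simp only [repr_eq_apply_dualBasis hΦ, map_sum, map_smul]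

end DualBasis

section Casimir

variable {k L ι : Type*} [Field k] [LieRing L] [LieAlgebra k L] [IsKilling k L]
  [DecidableEq ι] (b : Module.Basis ι k L)

section Finite

variable [Finite ι]

/-- The basis dual to `b` with respect to the Killing form, so that
`∑ i, b i ⊗ killingDualBasis b i` is the Casimir tensor. -/
noncomputable def killingDualBasis : Module.Basis ι k L :=
  (killingForm k L).dualBasis (killingForm_nondegenerate k L) b

lemma killingDualBasis_killingDualBasis : killingDualBasis (killingDualBasis b) = b :=
  LinearMap.BilinForm.dualBasis_dualBasis _ ⟨traceForm_comm k L L⟩ b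

end Finite

variable [Fintype ι]

lemma sum_apply_lie_killingDualBasis {N : Type*} [AddCommGroup N] [Module k N]
    (B : L →ₗ[k] L →ₗ[k] N) (w : L) :
    ∑ i, B ⁅w, killingDualBasis b i⁆ (b i) = -∑ i, B (killingDualBasis b i) ⁅w, b i⁆ := by
  have hw : LinearMap.IsAdjointPair (killingForm k L) (killingForm k L) (ad k L w) (-ad k L w) :=
    fun x y ↦ by simpa [-lie_skew] using traceForm_apply_lie_apply' k L L w x y
  simpa [killingDualBasis, -lie_skew] using
    sum_apply_dualBasis_of_isAdjointPair (killingForm_nondegenerate k L) b hw B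

theorem sum_lie_lie_killingDualBasis (x : L) : ∑ i, ⁅b i, ⁅killingDualBasis b i, x⁆⁆ = x := by
  refine LinearMap.ker_eq_bot.mp (ker_killingForm_eq_bot k L) (LinearMap.ext fun y ↦ ?_)
  calc killingForm k L (∑ i, ⁅b i, ⁅killingDualBasis b i, x⁆⁆) y
      = ∑ i, killingForm k L (killingDualBasis b i) ⁅x, ⁅y, b i⁆⁆ := by
        simp only [map_sum, LinearMap.sum_apply]
        refine Finset.sum_congr rfl fun i _ ↦ ?_
        rw [traceForm_comm, ← traceForm_apply_lie_apply, traceForm_comm, traceForm_apply_lie_apply]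
    _ = ∑ i, b.repr ⁅x, ⁅y, b i⁆⁆ i := by
        simp only [repr_eq_apply_dualBasis (killingForm_nondegenerate k L), killingDualBasis]
    _ = killingForm k L x y := by
        rw [killingForm_apply_apply, LinearMap.trace_eq_matrix_trace k b]
        simp [Matrix.trace, LinearMap.toMatrix_apply]

theorem sum_lie_lie_killingDualBasis_dual (f : Module.Dual k L) :
    ∑ i, ⁅b i, ⁅killingDualBasis b i, f⁆⁆ = f := by
  ext x
  have hx := sum_lie_lie_killingDualBasis (killingDualBasis b) x
  rw [killingDualBasis_killingDualBasis] at hx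
  conv_rhs => rw [← hx]
  simp [LinearMap.sum_apply]

/-- Contraction with the Casimir tensor turns a bilinear form `B` into the linear form
`x ↦ ∑ i, B(⁅b' i, x⁆, b i)`, where `b'` is the dual basis of `b`. It is equivariant because the
Casimir tensor is invariant. -/
noncomputable def killingContraction : (L →ₗ[k] L →ₗ[k] k) →ₗ⁅k,L⁆ Module.Dual k L where
  toFun B := ∑ i, B.flip (b i) ∘ₗ ad k L (killingDualBasis b i)
  map_add' B B' := by ext; simp [Finset.sum_add_distrib]
  map_smul' c B := by ext; simp [Finset.mul_sum]
  map_lie' {w B} := by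
    ext x
    have hw : ∑ i, B ⁅x, ⁅w, killingDualBasis b i⁆⁆ (b i) =
        -∑ i, B ⁅x, killingDualBasis b i⁆ ⁅w, b i⁆ :=
      sum_apply_lie_killingDualBasis b (B ∘ₗ ad k L x) w
    have hi (i : ι) : ⁅w, B⁆ ⁅killingDualBasis b i, x⁆ (b i) =
        B ⁅x, ⁅w, killingDualBasis b i⁆⁆ (b i) + B ⁅x, killingDualBasis b i⁆ ⁅w, b i⁆ -
          B ⁅killingDualBasis b i, ⁅w, x⁆⁆ (b i) := by
      rw [LieHom.lie_apply, LinearMap.sub_apply, Module.Dual.lie_apply, leibniz_lie w,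
        ← lie_skew x, ← lie_skew x (killingDualBasis b i)]
      simp only [map_add, map_neg, LinearMap.add_apply, LinearMap.neg_apply]
      ring
    simp only [LinearMap.sum_apply, LinearMap.comp_apply, LinearMap.flip_apply, ad_apply,
      Module.Dual.lie_apply, hi, Finset.sum_add_distrib, Finset.sum_sub_distrib, hw]
    ring

lemma killingContraction_apply (B : L →ₗ[k] L →ₗ[k] k) (x : L) :
    killingContraction b B x = ∑ i, B ⁅killingDualBasis b i, x⁆ (b i) := by
  simp [killingContraction]

end Casimir

section Equivariant

variable {k L M ι : Type*} [Field k] [LieRing L] [LieAlgebra k L] [IsKilling k L]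
  [AddCommGroup M] [Module k M] [Fintype ι] [DecidableEq ι] (b : Module.Basis ι k L)

lemma sum_apply_lie_lie_killingDualBasis (β : L →ₗ[k] L →ₗ[k] M) (x y : L) :
    ∑ i, β ⁅killingDualBasis b i, x⁆ ⁅b i, y⁆ =
      -∑ i, β (killingDualBasis b i) ⁅y, ⁅x, b i⁆⁆ := by
  refine .trans (Finset.sum_congr rfl fun i _ ↦ ?_)
    (sum_apply_lie_killingDualBasis b (β.compl₂ (ad k L y)) x)
  rw [← lie_skew _ x, ← lie_skew _ y, map_neg, map_neg, LinearMap.neg_apply, neg_neg,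
    LinearMap.compl₂_apply, ad_apply]

variable [LieRingModule L M] [LieModule k L M] {β : L →ₗ⁅k,L⁆ L →ₗ[k] M}

theorem apply_eq_sum_killingDualBasis (hβ : ∀ x y, β x y = -β y x)
    (hM : ∀ m : M, ∑ i, ⁅b i, ⁅killingDualBasis b i, m⁆⁆ = m) (x y : L) :
    β x y = ∑ i, β (killingDualBasis b i) ⁅b i, ⁅x, y⁆⁆ := by
  have hx : ∑ i, β ⁅b i, ⁅killingDualBasis b i, x⁆⁆ y = β x y := by
    rw [← LinearMap.sum_apply, ← map_sum, sum_lie_lie_killingDualBasis]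
  have hy : ∑ i, β x ⁅b i, ⁅killingDualBasis b i, y⁆⁆ = β x y := by
    rw [← map_sum, sum_lie_lie_killingDualBasis]
  have hxy : ∑ i, β ⁅killingDualBasis b i, x⁆ ⁅b i, y⁆ =
      -∑ i, β (killingDualBasis b i) ⁅y, ⁅x, b i⁆⁆ :=
    sum_apply_lie_lie_killingDualBasis b β.toLinearMap x y
  have hyx : ∑ i, β ⁅b i, x⁆ ⁅killingDualBasis b i, y⁆ =
      ∑ i, β (killingDualBasis b i) ⁅x, ⁅y, b i⁆⁆ := by
    simp only [hβ ⁅b _, x⁆, Finset.sum_neg_distrib]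
    exact neg_eq_iff_eq_neg.mpr (sum_apply_lie_lie_killingDualBasis b β.toLinearMap y x)
  have hC := hM (β x y)
  simp only [LieModuleHom.map_lie₂, lie_add, Finset.sum_add_distrib] at hC
  rw [hx, hy, hxy, hyx] at hC
  simp only [← lie_skew (b _) ⁅x, y⁆, lie_lie, map_neg, map_sub, Finset.sum_neg_distrib,
    Finset.sum_sub_distrib]
  linear_combination (norm := module) hC

theorem cyclic_sum_apply_lie_eq_zero (hβ : ∀ x y, β x y = -β y x)
    (hM : ∀ m : M, ∑ i, ⁅b i, ⁅killingDualBasis b i, m⁆⁆ = m) (x y z : L) :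
    β ⁅x, y⁆ z + β ⁅y, z⁆ x + β ⁅z, x⁆ y = 0 := by
  have hJacobi : ⁅⁅x, y⁆, z⁆ + ⁅⁅y, z⁆, x⁆ + ⁅⁅z, x⁆, y⁆ = 0 := by
    rw [← lie_skew ⁅x, y⁆, ← lie_skew ⁅y, z⁆, ← lie_skew ⁅z, x⁆]
    linear_combination (norm := abel) -lie_jacobi x y z
  simp only [apply_eq_sum_killingDualBasis b hβ hM ⁅_, _⁆, ← Finset.sum_add_distrib, ← map_add,
    ← lie_add, hJacobi, lie_zero, map_zero, Finset.sum_const_zero]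

end Equivariant

section Curry

variable {R M N : Type*} [CommSemiring R] [AddCommMonoid M] [Module R M]
  [AddCommMonoid N] [Module R N]

/-- An alternating map in two variables as a bilinear map. It is linear in the alternating map so
that it can be composed with two applications of `AlternatingMap.curryLeft`. -/
def curryAltTwo : (M [⋀^Fin 2]→ₗ[R] N) →ₗ[R] M →ₗ[R] M →ₗ[R] N :=
  LinearMap.compRight R ((MultilinearMap.ofSubsingletonₗ R R M N (0 : Fin 1)).symm.toLinearMap ∘ₗ
    AlternatingMap.toMultilinearMapLM) ∘ₗ AlternatingMap.curryLeftLinearMap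

lemma curryAltTwo_apply (f : M [⋀^Fin 2]→ₗ[R] N) (x y : M) : curryAltTwo f x y = f ![x, y] := by
  change f (Matrix.vecCons x fun _ ↦ y) = _
  congr!
  simp

/-- An alternating map in four variables as an iterated linear map, a form in which linear and
Lie-equivariant maps can be applied to a block of its variables. -/
def curryAltFour (T : M [⋀^Fin 4]→ₗ[R] N) : M →ₗ[R] M →ₗ[R] M →ₗ[R] M →ₗ[R] N :=
  curryAltTwo.compRight R ∘ₗ AlternatingMap.curryLeftLinearMap ∘ₗ T.curryLeft

lemma curryAltFour_apply (T : M [⋀^Fin 4]→ₗ[R] N) (x y z w : M) :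
    curryAltFour T x y z w = T ![x, y, z, w] :=
  curryAltTwo_apply ..

end Curry

section Skew

variable {R M N : Type*} [CommRing R] [AddCommGroup M] [Module R M]
  [AddCommGroup N] [Module R N] (T : M [⋀^Fin 4]→ₗ[R] N) (x y z w : M)

lemma curryAltFour_swap₁₂ : curryAltFour T x y z w = -curryAltFour T y x z w := by
  rw [curryAltFour_apply, curryAltFour_apply, ← T.map_swap _ (show (0 : Fin 4) ≠ 1 by decide)]
  congr 1; ext i; fin_cases i <;> rfl

lemma curryAltFour_swap₂₃ : curryAltFour T x y z w = -curryAltFour T x z y w := by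
  rw [curryAltFour_apply, curryAltFour_apply, ← T.map_swap _ (show (1 : Fin 4) ≠ 2 by decide)]
  congr 1; ext i; fin_cases i <;> rfl

lemma curryAltFour_swap₃₄ : curryAltFour T x y z w = -curryAltFour T x y w z := by
  rw [curryAltFour_apply, curryAltFour_apply, ← T.map_swap _ (show (2 : Fin 4) ≠ 3 by decide)]
  congr 1; ext i; fin_cases i <;> rfl

end Skew

namespace IsInvariantAlt4

variable {k L ι : Type*} [Field k] [LieRing L] [LieAlgebra k L] {T : L [⋀^Fin 4]→ₗ[k] k}

lemma curryAltFour_sum_lie_eq_zero (hT : IsInvariantAlt4 T) (w x₁ x₂ x₃ x₄ : L) :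
    curryAltFour T ⁅w, x₁⁆ x₂ x₃ x₄ + curryAltFour T x₁ ⁅w, x₂⁆ x₃ x₄ +
      curryAltFour T x₁ x₂ ⁅w, x₃⁆ x₄ + curryAltFour T x₁ x₂ x₃ ⁅w, x₄⁆ = 0 := by
  simpa only [curryAltFour_apply] using hT w x₁ x₂ x₃ x₄

lemma curryAltFour_lie_eq_cyclic_sum [NeZero (2 : k)] (hT : IsInvariantAlt4 T) (u v x y z : L) :
    curryAltFour T ⁅u, v⁆ x y z = curryAltFour T u v ⁅x, y⁆ z + curryAltFour T u v ⁅y, z⁆ x +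
      curryAltFour T u v ⁅z, x⁆ y := by
  have hcyc (a b c d : L) : curryAltFour T a b c d = curryAltFour T a d b c := by
    rw [curryAltFour_swap₃₄, curryAltFour_swap₂₃, neg_neg]
  have hfst (a b : L) : curryAltFour T ⁅a, b⁆ x y z + curryAltFour T b ⁅a, x⁆ y z +
      curryAltFour T b ⁅a, y⁆ z x + curryAltFour T b ⁅a, z⁆ x y = 0 := by
    rw [← hT.curryAltFour_sum_lie_eq_zero a b x y z, hcyc b x y, hcyc b x ⁅a, y⁆, hcyc b z x]
  have hsnd (a b c : L) : curryAltFour T v ⁅u, a⁆ b c - curryAltFour T u ⁅v, a⁆ b c +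
      curryAltFour T u v ⁅a, b⁆ c + curryAltFour T u v ⁅c, a⁆ b = 0 := by
    rw [← hT.curryAltFour_sum_lie_eq_zero a u v b c, curryAltFour_swap₁₂ T ⁅a, u⁆, ← lie_skew a u,
      ← lie_skew a v, ← lie_skew a c, curryAltFour_swap₃₄ T u v b]
    simp only [map_neg, LinearMap.neg_apply]
    ring
  have hskew : curryAltFour T ⁅v, u⁆ x y z = -curryAltFour T ⁅u, v⁆ x y z := by
    rw [← lie_skew v u, ← neg_one_smul k ⁅u, v⁆, map_smul]
    simp
  refine mul_left_cancel₀ (two_ne_zero (α := k)) ?_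
  linear_combination hfst u v - hfst v u + hskew - hsnd x y z - hsnd y z x - hsnd z x y

lemma curryAltFour_lie_eq_sub (hT : IsInvariantAlt4 T) (w x y : L) :
    curryAltFour T ⁅w, x⁆ y = ⁅w, curryAltFour T x y⁆ - curryAltFour T x ⁅w, y⁆ := by
  ext z v
  rw [LinearMap.sub_apply, LinearMap.sub_apply, LieHom.lie_apply, LinearMap.sub_apply,
    Module.Dual.lie_apply]
  linear_combination hT.curryAltFour_sum_lie_eq_zero w x y z v

variable [IsKilling k L] [Fintype ι] [DecidableEq ι] (b : Module.Basis ι k L)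

/-- The equivariant skew map `L × L → L*` attached to an invariant alternating 4-form `T`, taking
`(x, y)` to the Casimir contraction `z ↦ ∑ i, T(x, y, ⁅b' i, z⁆, b i)` of `T(x, y, ·, ·)`. -/
noncomputable def contraction (hT : IsInvariantAlt4 T) : L →ₗ⁅k,L⁆ L →ₗ[k] Module.Dual k L where
  toLinearMap := (killingContraction b).toLinearMap.compRight k ∘ₗ curryAltFour T
  map_lie' {w x} := by
    refine LinearMap.ext fun y ↦ ?_
    change killingContraction b (curryAltFour T ⁅w, x⁆ y) =
      ⁅w, killingContraction b (curryAltFour T x y)⁆ -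
        killingContraction b (curryAltFour T x ⁅w, y⁆)
    rw [hT.curryAltFour_lie_eq_sub, ← LieModuleHom.map_lie]
    exact map_sub (killingContraction b).toLinearMap _ _

lemma contraction_apply (hT : IsInvariantAlt4 T) (x y z : L) :
    hT.contraction b x y z = ∑ i, curryAltFour T x y ⁅killingDualBasis b i, z⁆ (b i) :=
  killingContraction_apply ..

lemma contraction_swap (hT : IsInvariantAlt4 T) (x y : L) :
    hT.contraction b x y = -hT.contraction b y x := by
  ext z
  simp only [contraction_apply, LinearMap.neg_apply, curryAltFour_swap₁₂ T x y,
    Finset.sum_neg_distrib]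

theorem curryAltFour_eq_neg_contraction [NeZero (2 : k)] (hT : IsInvariantAlt4 T) (x y z w : L) :
    curryAltFour T w x y z = -(hT.contraction b ⁅x, y⁆ z + hT.contraction b ⁅y, z⁆ x +
      hT.contraction b ⁅z, x⁆ y) w := by
  have hrev (u v p q : L) : curryAltFour T u v p q = -curryAltFour T p q v u := by
    rw [curryAltFour_swap₂₃ T u v, curryAltFour_swap₁₂ T u p, curryAltFour_swap₃₄ T p u,
      curryAltFour_swap₂₃ T p u, curryAltFour_swap₃₄ T p q u]
    ring
  conv_lhs => rw [← sum_lie_lie_killingDualBasis b w]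
  simp only [map_sum, LinearMap.sum_apply, hT.curryAltFour_lie_eq_cyclic_sum, hrev (b _),
    contraction_apply, LinearMap.add_apply, Finset.sum_add_distrib, Finset.sum_neg_distrib]
  ring

end IsInvariantAlt4

theorem invariant_alternating_four_form_eq_zero_general
    (k : Type*) [Field k] [NeZero (2 : k)]
    (L : Type*) [LieRing L] [LieAlgebra k L] [Module.Finite k L] [IsKilling k L]
    (T : L [⋀^Fin 4]→ₗ[k] k) (hT : IsInvariantAlt4 T) :
    T = 0 := by
  classical
  let b := Module.finBasis k L
  ext v
  have hv : v = ![v 0, v 1, v 2, v 3] := by ext i; fin_cases i <;> rfl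
  rw [hv, ← curryAltFour_apply, hT.curryAltFour_eq_neg_contraction b,
    cyclic_sum_apply_lie_eq_zero b (hT.contraction_swap b) (sum_lie_lie_killingDualBasis_dual b),
    LinearMap.zero_apply, neg_zero, AlternatingMap.zero_apply]

/-- Over an algebraically closed field of characteristic zero, every invariant alternating
4-linear form on a finite-dimensional simple Lie algebra vanishes identically. -/
theorem invariant_alternating_four_form_eq_zero
    (k : Type*) [Field k] [IsAlgClosed k] [CharZero k]
    (L : Type*) [LieRing L] [LieAlgebra k L] [Module.Finite k L]
    [LieAlgebra.IsSimple k L]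
    (T : L [⋀^Fin 4]→ₗ[k] k) (hT : IsInvariantAlt4 T) :
    T = 0 :=
  invariant_alternating_four_form_eq_zero_general k L T hT
end
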